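/- arXiv:1511.08995 — 6 statements merged into one kernel-verified Lean document; each statement's English description precedes it below -/
import Mathlib

section
/- Let c > 0 be a real constant, let L be a fixed real 3×3 matrix, and let A : ℝ → (3×3 real matrices) be differentiable at t with derivative A'(t) = −A(t)·L − c · |det A(t)|^{5/3} · A(t) · dev(A(t)ᵀA(t)). Then the function G(t) = A(t)ᵀ A(t) is differentiable at t with derivative G'(t) = −( G(t)·L + Lᵀ·G(t) ) − 2c · |det A(t)|^{5/3} · G(t) · dev(G(t)). (This is the evolution equation of the metric tensor G = AᵀA implied by the relaxation equation for the distortion tensor A of the HPR model.) -/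
open Matrix

attribute [local instance] Matrix.normedAddCommGroup Matrix.normedSpace

/-- The deviator (trace-free part) of a real 3×3 matrix: `dev M = M - (1/3) tr(M) • I`. -/
noncomputable def dev (M : Matrix (Fin 3) (Fin 3) ℝ) : Matrix (Fin 3) (Fin 3) ℝ :=
  M - (Matrix.trace M / 3) • (1 : Matrix (Fin 3) (Fin 3) ℝ)

/-!
For a curve with `A' = A * B`, the Gram matrix `G = Aᵀ * A` satisfies `G' = G * B + Bᵀ * G`.
The relaxation equation is the case `B = -L - k • S` with `S = dev G`. A linear combination of the
symmetric matrix `G` and the identity, `S` is symmetric and commutes with `G`, so `G * S` and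
`Sᵀ * G` agree: this is the factor `2`.
-/

section MatrixCurves

variable {𝕜 E R l m n : Type*} [NontriviallyNormedField 𝕜] [NormedAddCommGroup E]
  [NormedSpace 𝕜 E]

theorem hasDerivAt_matrix_iff [Finite n] {A : 𝕜 → Matrix m n E} {A' : Matrix m n E} {t : 𝕜} :
    HasDerivAt A A' t ↔ ∀ i j, HasDerivAt (fun s => A s i j) (A' i j) t := by
  have := Fintype.ofFinite n
  exact hasDerivAt_pi.trans (forall_congr' fun _ => hasDerivAt_pi)

theorem hasDerivAt_matrix_transpose [Finite m] [Finite n] {A : 𝕜 → Matrix m n E}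
    {A' : Matrix m n E} {t : 𝕜} (hA : HasDerivAt A A' t) :
    HasDerivAt (fun s => (A s)ᵀ) A'ᵀ t :=
  hasDerivAt_matrix_iff.2 fun i j => hasDerivAt_matrix_iff.1 hA j i

theorem hasDerivAt_matrix_mul [Fintype m] [Finite n] [NormedRing R] [NormedAlgebra 𝕜 R]
    {A : 𝕜 → Matrix l m R} {A' : Matrix l m R} {B : 𝕜 → Matrix m n R} {B' : Matrix m n R} {t : 𝕜}
    (hA : HasDerivAt A A' t) (hB : HasDerivAt B B' t) :
    HasDerivAt (fun s => A s * B s) (A' * B t + A t * B') t := by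
  refine hasDerivAt_matrix_iff.2 fun i j => ?_
  simp only [Matrix.add_apply, mul_apply, ← Finset.sum_add_distrib]
  exact HasDerivAt.fun_sum fun k _ =>
    (hasDerivAt_matrix_iff.1 hA i k).fun_mul (hasDerivAt_matrix_iff.1 hB k j)

theorem hasDerivAt_transpose_mul_self [Fintype m] [Fintype n] [NormedCommRing R]
    [NormedAlgebra 𝕜 R] {A : 𝕜 → Matrix m n R} {B : Matrix n n R} {t : 𝕜}
    (hA : HasDerivAt A (A t * B) t) :
    HasDerivAt (fun s => (A s)ᵀ * A s) ((A t)ᵀ * A t * B + Bᵀ * ((A t)ᵀ * A t)) t := by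
  have hAt : HasDerivAt (fun s => (A s)ᵀ) (A t * B)ᵀ t := hasDerivAt_matrix_transpose hA
  have h := hasDerivAt_matrix_mul hAt hA
  rwa [transpose_mul, Matrix.mul_assoc, ← Matrix.mul_assoc (A t)ᵀ, add_comm] at h

theorem metric_tensor_evolution_general [Fintype m] [Fintype n] [NormedCommRing R]
    [NormedAlgebra 𝕜 R] {A : 𝕜 → Matrix m n R} {L S : Matrix n n R} {k t : 𝕜}
    (hS : S.IsSymm) (hGS : Commute ((A t)ᵀ * A t) S)
    (hA : HasDerivAt A (-(A t * L) - k • (A t * S)) t) :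
    HasDerivAt (fun s => (A s)ᵀ * A s)
      (-((A t)ᵀ * A t * L + Lᵀ * ((A t)ᵀ * A t)) - (2 * k) • ((A t)ᵀ * A t * S)) t := by
  have hfactor : -(A t * L) - k • (A t * S) = A t * (-L - k • S) := by
    rw [Matrix.mul_sub, Matrix.mul_neg, Matrix.mul_smul]
  rw [hfactor] at hA
  convert hasDerivAt_transpose_mul_self hA using 1
  rw [transpose_sub, transpose_neg, transpose_smul, hS.eq, Matrix.mul_sub, Matrix.sub_mul,
    Matrix.mul_neg, Matrix.neg_mul, Matrix.mul_smul, Matrix.smul_mul, ← hGS.eq]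
  module

end MatrixCurves

theorem isSymm_dev {M : Matrix (Fin 3) (Fin 3) ℝ} (hM : M.IsSymm) : (dev M).IsSymm :=
  hM.sub (isSymm_one.smul _)

theorem commute_dev (M : Matrix (Fin 3) (Fin 3) ℝ) : Commute M (dev M) :=
  (Commute.refl M).sub_right ((Commute.one_right M).smul_right _)

/-- If `A : ℝ → Matrix 3 3 ℝ` satisfies at `t` the relaxation ODE
`A' = −A·L − c |det A|^(5/3) A dev(AᵀA)` (with `c > 0` and constant `L`), then
`G = AᵀA` satisfies `G' = −(G·L + Lᵀ·G) − 2c |det A|^(5/3) G dev(G)` at `t`. -/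
theorem metric_tensor_evolution (c : ℝ) (hc : 0 < c)
    (L : Matrix (Fin 3) (Fin 3) ℝ) (A : ℝ → Matrix (Fin 3) (Fin 3) ℝ) (t : ℝ)
    (hA : HasDerivAt A
      (-(A t * L) - (c * |(A t).det| ^ ((5 : ℝ) / 3)) • (A t * dev ((A t)ᵀ * A t))) t) :
    HasDerivAt (fun s => (A s)ᵀ * A s)
      (-(((A t)ᵀ * A t) * L + Lᵀ * ((A t)ᵀ * A t)) -
        (2 * c * |(A t).det| ^ ((5 : ℝ) / 3)) •
          (((A t)ᵀ * A t) * dev ((A t)ᵀ * A t))) t := by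
  rw [mul_assoc 2 c]
  exact metric_tensor_evolution_general (isSymm_dev (isSymm_transpose_mul_self (A t)))
    (commute_dev _) hA
end

section
/- Let ρ > 0, c₀, c_s be real numbers and let A be the real 8×8 matrix (acting on the state (ρ, p, v₁, v₂, v₃, A₁₁, A₂₁, A₃₁)) whose only nonzero entries are: A(1,3) = ρ, A(2,3) = ρ c₀², A(3,2) = 1/ρ, A(3,6) = (4/3) c_s², A(4,7) = c_s², A(5,8) = c_s², A(6,3) = 1, A(7,4) = 1, A(8,5) = 1. Then the characteristic polynomial of A equals X² (X² − c_s²)² (X² − (c₀² + (4/3) c_s²)). In particular, if c_s > 0 and c₀ > 0, the nonzero eigenvalues of A are exactly ±c_s (each with multiplicity two) and ±√(c₀² + (4/3) c_s²). -/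
open Matrix Polynomial

/-! The matrix is odd for the splitting of the state into `(ρ, p, A₁₁, A₂₁, A₃₁)` and
the velocities `(v₁, v₂, v₃)`: each half is mapped into the other. For such a matrix, with
off-diagonal blocks `B` and `D`, the product `D * B` on the smaller half determines the
characteristic polynomial, up to a power of `X` and the substitution of `X ^ 2` for `X`. Here
`D * B` is the `3 × 3` acoustic tensor, which is diagonal with the squared wave speeds as
entries. -/

section BlockAntidiagonal

variable {R m n : Type*} [CommRing R] [Fintype m] [DecidableEq m] [Fintype n] [DecidableEq n]

theorem det_scalar_X_sq_sub_map_C (M : Matrix n n R) :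
    (scalar n (X ^ 2) - M.map C).det = expand R 2 M.charpoly := by
  rw [charpoly, AlgHom.map_det]
  congr 1
  ext1 i j
  by_cases h : i = j <;> simp [h]

theorem X_pow_mul_charpoly_fromBlocks_zero₁₁_zero₂₂ (B : Matrix m n R) (D : Matrix n m R) :
    X ^ Fintype.card n * (fromBlocks 0 B D 0).charpoly =
      X ^ Fintype.card m * expand R 2 (D * B).charpoly := by
  let E : Matrix (m ⊕ n) (m ⊕ n) R[X] := fromBlocks 1 (B.map C) 0 (scalar n X)
  have h_elim : charmatrix (fromBlocks 0 B D 0) * E =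
      fromBlocks (scalar m X) 0 (-D.map C) (scalar n (X ^ 2) - (D * B).map C) := by
    rw [charmatrix_fromBlocks, charmatrix_zero, charmatrix_zero, fromBlocks_multiply,
      scalar_comm X (Commute.all X) (B.map C)]
    simp [sub_eq_add_neg, pow_two, add_comm]
  have h_det := congrArg det h_elim
  rw [det_mul, det_fromBlocks_zero₂₁, det_fromBlocks_zero₁₂, det_scalar_X_sq_sub_map_C] at h_det
  simpa [charpoly, mul_comm] using h_det

theorem charpoly_fromBlocks_zero₁₁_zero₂₂_of_card_le (B : Matrix m n R) (D : Matrix n m R)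
    (hle : Fintype.card n ≤ Fintype.card m) :
    (fromBlocks 0 B D 0).charpoly =
      X ^ (Fintype.card m - Fintype.card n) * expand R 2 (D * B).charpoly := by
  rw [← (isRegular_X_pow (Fintype.card n)).left.eq_iff, ← mul_assoc, ← pow_add,
    Nat.add_sub_cancel' hle, X_pow_mul_charpoly_fromBlocks_zero₁₁_zero₂₂]

end BlockAntidiagonal

section ViscousSubsystem

variable {R : Type*} [CommRing R]

/-- The block of the coefficient matrix through which the velocities `(v₁, v₂, v₃)` act on
`(ρ, p, A₁₁, A₂₁, A₃₁)`; `r` stands for the rest density and `k` for the bulk modulus `ρ c₀²`. -/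
def velocityBlock (r k : R) : Matrix (Fin 5) (Fin 3) R :=
  !![r, 0, 0;
     k, 0, 0;
     1, 0, 0;
     0, 1, 0;
     0, 0, 1]

/-- The block of the coefficient matrix through which `(ρ, p, A₁₁, A₂₁, A₃₁)` act on the velocities
`(v₁, v₂, v₃)`; `s` stands for the specific volume `1/ρ`, and `l`, `t` for the longitudinal and
transverse elastic coefficients `(4/3) c_s²` and `c_s²`. -/
def forceBlock (s l t : R) : Matrix (Fin 3) (Fin 5) R :=
  !![0, s, l, 0, 0;
     0, 0, 0, t, 0;
     0, 0, 0, 0, t]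

theorem forceBlock_mul_velocityBlock (r k s l t : R) :
    forceBlock s l t * velocityBlock r k = diagonal ![s * k + l, t, t] := by
  ext i j
  fin_cases i <;> fin_cases j <;>
    simp [forceBlock, velocityBlock, mul_apply, Fin.sum_univ_succ]

theorem charpoly_fromBlocks_velocityBlock_forceBlock (r k s l t : R) :
    (fromBlocks 0 (velocityBlock r k) (forceBlock s l t) 0).charpoly =
      X ^ 2 * (X ^ 2 - C t) ^ 2 * (X ^ 2 - C (s * k + l)) := by
  rw [charpoly_fromBlocks_zero₁₁_zero₂₂_of_card_le _ _ (by simp), forceBlock_mul_velocityBlock,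
    charpoly_diagonal, Fin.prod_univ_three]
  simp only [Fintype.card_fin, Nat.reduceSub, cons_val, map_add, map_mul, map_sub, expand_X,
    expand_C]
  ring

/-- The enumeration of the state `(ρ, p, v₁, v₂, v₃, A₁₁, A₂₁, A₃₁)` that lists
`(ρ, p, A₁₁, A₂₁, A₃₁)` on the left and `(v₁, v₂, v₃)` on the right. -/
noncomputable def stateEquiv : Fin 5 ⊕ Fin 3 ≃ Fin 8 :=
  Equiv.ofBijective (Sum.elim ![0, 1, 5, 6, 7] ![2, 3, 4]) (by decide)

theorem charpoly_viscous_matrix (r k s l t : R) :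
    (!![0, 0, r, 0, 0, 0, 0, 0;
        0, 0, k, 0, 0, 0, 0, 0;
        0, s, 0, 0, 0, l, 0, 0;
        0, 0, 0, 0, 0, 0, t, 0;
        0, 0, 0, 0, 0, 0, 0, t;
        0, 0, 1, 0, 0, 0, 0, 0;
        0, 0, 0, 1, 0, 0, 0, 0;
        0, 0, 0, 0, 1, 0, 0, 0] : Matrix (Fin 8) (Fin 8) R).charpoly =
      X ^ 2 * (X ^ 2 - C t) ^ 2 * (X ^ 2 - C (s * k + l)) := by
  rw [← charpoly_fromBlocks_velocityBlock_forceBlock r k s l t,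
    ← charpoly_reindex stateEquiv.symm]
  congr 1
  ext (i | i) (j | j) <;> fin_cases i <;> fin_cases j <;> rfl

end ViscousSubsystem

section Roots

variable {R : Type*} [CommRing R] [IsDomain R]

theorem roots_X_sq_sub_C_sq (a : R) : (X ^ 2 - C (a ^ 2)).roots = {a, -a} := by
  have h_factor : (X ^ 2 - C (a ^ 2) : R[X]) = (X - C a) * (X - C (-a)) := by
    simp only [map_pow, map_neg]
    ring
  rw [h_factor, roots_mul (mul_ne_zero (X_sub_C_ne_zero _) (X_sub_C_ne_zero _)),
    roots_X_sub_C, roots_X_sub_C]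
  rfl

theorem roots_X_sq_mul_X_sq_sub_C_sq (a b : R) :
    (X ^ 2 * (X ^ 2 - C (a ^ 2)) ^ 2 * (X ^ 2 - C (b ^ 2))).roots =
      2 • {0} + 2 • {a, -a} + {b, -b} := by
  have h_ne (c : R) : (X ^ 2 - C c : R[X]) ≠ 0 := X_pow_sub_C_ne_zero two_pos c
  have h_mul_ne : (X ^ 2 * (X ^ 2 - C (a ^ 2)) ^ 2 : R[X]) ≠ 0 :=
    mul_ne_zero (pow_ne_zero 2 X_ne_zero) (pow_ne_zero 2 (h_ne _))
  rw [roots_mul (mul_ne_zero h_mul_ne (h_ne _)), roots_mul h_mul_ne, roots_X_pow, roots_pow,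
    roots_X_sq_sub_C_sq, roots_X_sq_sub_C_sq]

theorem isRoot_X_sq_mul_X_sq_sub_C_sq_iff {a b x : R} (hx : x ≠ 0) :
    (X ^ 2 * (X ^ 2 - C (a ^ 2)) ^ 2 * (X ^ 2 - C (b ^ 2))).IsRoot x ↔
      x = a ∨ x = -a ∨ x = b ∨ x = -b := by
  simp [hx, sub_eq_zero, sq_eq_sq_iff_eq_or_eq_neg, or_assoc]

theorem rootMultiplicity_X_sq_mul_X_sq_sub_C_sq {a b : R} (ha : a ≠ -a) (hab : a ^ 2 ≠ b ^ 2) :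
    (X ^ 2 * (X ^ 2 - C (a ^ 2)) ^ 2 * (X ^ 2 - C (b ^ 2))).rootMultiplicity a = 2 := by
  have ha_zero : a ≠ 0 := fun h => ha (by simp [h])
  obtain ⟨hb, hb_neg⟩ : a ≠ b ∧ a ≠ -b := by
    simpa [sq_eq_sq_iff_eq_or_eq_neg] using hab
  classical
  rw [← count_roots, roots_X_sq_mul_X_sq_sub_C_sq]
  simp [ha, ha_zero, hb, hb_neg]

end Roots

/-- The coefficient matrix of the viscous (non-heat-conducting) subsystem of the HPR model,
linearized at the rest state, has characteristic polynomial
`X² (X² − c_s²)² (X² − (c₀² + (4/3)c_s²))`; in particular, for `c_s > 0`, `c₀ > 0`, its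
nonzero eigenvalues are exactly `±c_s` (each with multiplicity two) and
`±√(c₀² + (4/3)c_s²)`. -/
theorem viscous_subsystem_charpoly (ρ c0 cs : ℝ) (hρ : 0 < ρ) :
    let A : Matrix (Fin 8) (Fin 8) ℝ :=
      !![0, 0, ρ,        0, 0, 0,              0,      0;
         0, 0, ρ * c0^2, 0, 0, 0,              0,      0;
         0, 1/ρ, 0,      0, 0, (4/3) * cs^2,   0,      0;
         0, 0, 0,        0, 0, 0,              cs^2,   0;
         0, 0, 0,        0, 0, 0,              0,      cs^2;
         0, 0, 1,        0, 0, 0,              0,      0;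
         0, 0, 0,        1, 0, 0,              0,      0;
         0, 0, 0,        0, 1, 0,              0,      0]
    A.charpoly =
        X ^ 2 * (X ^ 2 - C (cs ^ 2)) ^ 2 * (X ^ 2 - C (c0 ^ 2 + (4/3) * cs ^ 2)) ∧
      (0 < cs → 0 < c0 →
        (∀ lam : ℝ, lam ≠ 0 →
          (A.charpoly.IsRoot lam ↔
            lam = cs ∨ lam = -cs ∨
              lam = Real.sqrt (c0 ^ 2 + (4/3) * cs ^ 2) ∨
              lam = -Real.sqrt (c0 ^ 2 + (4/3) * cs ^ 2))) ∧
        A.charpoly.rootMultiplicity cs = 2 ∧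
        A.charpoly.rootMultiplicity (-cs) = 2) := by
  intro A
  have hA : A.charpoly =
      X ^ 2 * (X ^ 2 - C (cs ^ 2)) ^ 2 * (X ^ 2 - C (c0 ^ 2 + (4/3) * cs ^ 2)) := by
    have h_longitudinal : 1 / ρ * (ρ * c0 ^ 2) + 4 / 3 * cs ^ 2 = c0 ^ 2 + 4 / 3 * cs ^ 2 := by
      field_simp
    rw [charpoly_viscous_matrix, h_longitudinal]
  refine ⟨hA, fun hcs hc0 => ?_⟩
  have h_sqrt : √(c0 ^ 2 + (4/3) * cs ^ 2) ^ 2 = c0 ^ 2 + (4/3) * cs ^ 2 :=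
    Real.sq_sqrt (by positivity)
  have h_speeds : cs ^ 2 ≠ √(c0 ^ 2 + (4/3) * cs ^ 2) ^ 2 := by
    rw [h_sqrt]
    exact (by linarith [pow_pos hc0 2, pow_pos hcs 2] : cs ^ 2 < _).ne
  have h_neg : cs ≠ -cs := (neg_lt_self hcs).ne'
  rw [← h_sqrt] at hA
  rw [hA]
  refine ⟨fun lam hlam => isRoot_X_sq_mul_X_sq_sub_C_sq_iff hlam,
    rootMultiplicity_X_sq_mul_X_sq_sub_C_sq h_neg h_speeds, ?_⟩
  rw [← neg_sq cs]
  exact rootMultiplicity_X_sq_mul_X_sq_sub_C_sq (by simpa using h_neg.symm)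
    (by simpa using h_speeds)
end

section
/- Let c₀ > 0 and c_s > 0 be real numbers, set c_∞ = √(c₀² + (4/3)c_s²), and for Ω > 0 define X(Ω) = √(Ω² + 16), Y(Ω) = √(Ω² + 16 (c₀/c_∞)⁴), and the longitudinal phase velocity V^long(Ω) = (c_∞/(2 X(Ω))) ( √((X(Ω)−Ω)(Y(Ω)−Ω)) + √((X(Ω)+Ω)(Y(Ω)+Ω)) ). Then V^long(Ω) tends to c₀ as Ω tends to 0 from the right: the low-frequency limit of the longitudinal sound speed of the HPR model is the adiabatic sound speed c₀. -/
open Filter Topology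

/-!
Since `X` never vanishes, `V^long` extends continuously to all real `Ω`, so its limit at `0` is
its value there. At `Ω = 0` we have `X = 4` and `Y = 4 (c₀ / c_∞)²`; both products under the outer
square roots become the perfect square `(4 c₀ / c_∞)²`, and the factor `c_∞ / 8` turns the sum of
their roots into `c₀`.
-/

/-- The longitudinal phase velocity `V^long(Ω)` of the HPR model, as a function of the adiabatic
sound speed `c0`, the longitudinal characteristic speed `cinf` and the dimensionless frequency `Ω`.
Here `cinf` is an independent parameter, not tied to a shear sound speed. -/
noncomputable def longitudinalPhaseVelocity (c0 cinf Ω : ℝ) : ℝ :=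
  let X := √(Ω ^ 2 + 16)
  let Y := √(Ω ^ 2 + 16 * (c0 / cinf) ^ 4)
  cinf / (2 * X) * (√((X - Ω) * (Y - Ω)) + √((X + Ω) * (Y + Ω)))

theorem continuous_longitudinalPhaseVelocity (c0 cinf : ℝ) :
    Continuous (longitudinalPhaseVelocity c0 cinf) := by
  have two_mul_X_ne_zero (Ω : ℝ) : 2 * √(Ω ^ 2 + 16) ≠ 0 := by positivity
  unfold longitudinalPhaseVelocity
  exact (Continuous.div (by fun_prop) (by fun_prop) two_mul_X_ne_zero).mul (by fun_prop)

theorem longitudinalPhaseVelocity_zero (c0 : ℝ) {cinf : ℝ} (hcinf : 0 < cinf) :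
    longitudinalPhaseVelocity c0 cinf 0 = |c0| := by
  have X_zero : √((0 : ℝ) ^ 2 + 16) = 4 := by
    rw [show (0 : ℝ) ^ 2 + 16 = 4 ^ 2 by norm_num, Real.sqrt_sq (by norm_num)]
  have Y_zero : √(0 ^ 2 + 16 * (c0 / cinf) ^ 4) = 4 * (c0 / cinf) ^ 2 := by
    rw [show 0 ^ 2 + 16 * (c0 / cinf) ^ 4 = (4 * (c0 / cinf) ^ 2) ^ 2 by ring,
      Real.sqrt_sq (by positivity)]
  have sqrt_X_mul_Y : √(4 * (4 * (c0 / cinf) ^ 2)) = 4 * (|c0| / cinf) := by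
    rw [show 4 * (4 * (c0 / cinf) ^ 2) = (4 * (c0 / cinf)) ^ 2 by ring, Real.sqrt_sq_eq_abs,
      abs_mul, abs_div, abs_of_pos hcinf, abs_of_pos four_pos]
  calc longitudinalPhaseVelocity c0 cinf 0
      = cinf / (2 * 4) * (4 * (|c0| / cinf) + 4 * (|c0| / cinf)) := by
        simp only [longitudinalPhaseVelocity, X_zero, Y_zero, sub_zero, add_zero, sqrt_X_mul_Y]
    _ = |c0| := by
        field_simp
        ring

theorem longitudinal_phase_velocity_low_freq_limit_general (c0 : ℝ) {cinf : ℝ}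
    (hcinf : 0 < cinf) :
    Tendsto (longitudinalPhaseVelocity c0 cinf) (𝓝 0) (𝓝 |c0|) :=
  (continuous_longitudinalPhaseVelocity c0 cinf).tendsto' 0 |c0|
    (longitudinalPhaseVelocity_zero c0 hcinf)

/-- The low-frequency limit of the longitudinal phase velocity `V^long(Ω)` of the HPR model
is the adiabatic sound speed `c₀`: `V^long(Ω) → c₀` as `Ω → 0⁺`. -/
theorem longitudinal_phase_velocity_low_freq_limit (c0 cs : ℝ) (hc0 : 0 < c0) (hcs : 0 < cs) :
    Filter.Tendsto
      (fun Ω : ℝ =>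
        let cinf := Real.sqrt (c0 ^ 2 + (4/3) * cs ^ 2)
        let X := Real.sqrt (Ω ^ 2 + 16)
        let Y := Real.sqrt (Ω ^ 2 + 16 * (c0 / cinf) ^ 4)
        (cinf / (2 * X)) *
          (Real.sqrt ((X - Ω) * (Y - Ω)) + Real.sqrt ((X + Ω) * (Y + Ω))))
      (nhdsWithin 0 (Set.Ioi 0)) (nhds c0) := by
  have hcinf : 0 < √(c0 ^ 2 + (4/3) * cs ^ 2) := by positivity
  have limit := longitudinal_phase_velocity_low_freq_limit_general c0 hcinf
  rw [abs_of_pos hc0] at limit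
  exact limit.mono_left nhdsWithin_le_nhds
end

section
/- Let c₀ > 0 and c_s > 0 be real numbers, set c_∞ = √(c₀² + (4/3)c_s²), and for Ω > 0 define X(Ω) = √(Ω² + 16), Y(Ω) = √(Ω² + 16 (c₀/c_∞)⁴), and the longitudinal phase velocity V^long(Ω) = (c_∞/(2 X(Ω))) ( √((X(Ω)−Ω)(Y(Ω)−Ω)) + √((X(Ω)+Ω)(Y(Ω)+Ω)) ). Then V^long(Ω) tends to c_∞ as Ω tends to +∞: the high-frequency limit of the longitudinal sound speed of the HPR model is the finite characteristic speed c_∞ = √(c₀² + (4/3)c_s²). -/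
open Filter Topology

/-!
Divide by `Ω`: since `X / Ω → 1` and `Y / Ω → 1`, the first square root is `o(Ω)` and the second is
asymptotic to `√((1 + 1) * (1 + 1)) * Ω = 2 * Ω`, which cancels the factor `2 * X` below `c_∞`.
-/

lemma tendsto_sqrt_sq_add_div_self_atTop (m : ℝ) :
    Tendsto (fun x : ℝ => √(x ^ 2 + m) / x) atTop (𝓝 1) := by
  have hinv : Tendsto (fun x : ℝ => m / x ^ 2) atTop (𝓝 0) :=
    tendsto_const_nhds.div_atTop (tendsto_pow_atTop two_ne_zero)
  have hsqrt : Tendsto (fun x : ℝ => √(1 + m / x ^ 2)) atTop (𝓝 1) := by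
    simpa only [add_zero, Real.sqrt_one] using (hinv.const_add 1).sqrt
  refine hsqrt.congr' ?_
  filter_upwards [eventually_gt_atTop 0] with x hx
  calc √(1 + m / x ^ 2) = √((x ^ 2 + m) / x ^ 2) := by
        rw [add_div, div_self (pow_ne_zero 2 hx.ne')]
    _ = √(x ^ 2 + m) / x := by rw [Real.sqrt_div' _ (sq_nonneg x), Real.sqrt_sq hx.le]

lemma tendsto_sqrt_add_mul_add_div {α : Type*} {l : Filter α} {f g w : α → ℝ} {a b : ℝ}
    (hw : ∀ᶠ t in l, 0 < w t) (hf : Tendsto (fun t => f t / w t) l (𝓝 a))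
    (hg : Tendsto (fun t => g t / w t) l (𝓝 b)) (s : ℝ) :
    Tendsto (fun t => √((f t + s * w t) * (g t + s * w t)) / w t) l
      (𝓝 √((a + s) * (b + s))) := by
  refine ((hf.add_const s).mul (hg.add_const s)).sqrt.congr' ?_
  filter_upwards [hw] with t ht
  calc √((f t / w t + s) * (g t / w t + s))
      = √((f t + s * w t) * (g t + s * w t) / w t ^ 2) := by
        congr 1
        field_simp
    _ = √((f t + s * w t) * (g t + s * w t)) / w t := by
        rw [Real.sqrt_div' _ (sq_nonneg _), Real.sqrt_sq ht.le]

/-- The offsets are squares so that `X ≥ Ω` and `Y ≥ Ω`: the first radicand is then nonnegative,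
away from the junk value of `√`. -/
theorem longitudinal_phase_velocity_high_freq_limit_general (c a b : ℝ) :
    Tendsto
      (fun Ω : ℝ =>
        let X := √(Ω ^ 2 + a ^ 2)
        let Y := √(Ω ^ 2 + b ^ 2)
        c / (2 * X) * (√((X - Ω) * (Y - Ω)) + √((X + Ω) * (Y + Ω))))
      atTop (𝓝 c) := by
  have hpos : ∀ᶠ Ω : ℝ in atTop, 0 < Ω := eventually_gt_atTop 0
  have hX := tendsto_sqrt_sq_add_div_self_atTop (a ^ 2)
  have hY := tendsto_sqrt_sq_add_div_self_atTop (b ^ 2)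
  have hminus : Tendsto
      (fun Ω : ℝ => √((√(Ω ^ 2 + a ^ 2) - Ω) * (√(Ω ^ 2 + b ^ 2) - Ω)) / Ω) atTop (𝓝 0) := by
    simpa [← sub_eq_add_neg] using tendsto_sqrt_add_mul_add_div hpos hX hY (-1)
  have hplus : Tendsto
      (fun Ω : ℝ => √((√(Ω ^ 2 + a ^ 2) + Ω) * (√(Ω ^ 2 + b ^ 2) + Ω)) / Ω) atTop (𝓝 2) := by
    simpa [one_add_one_eq_two] using tendsto_sqrt_add_mul_add_div hpos hX hY 1
  have hfactor : Tendsto (fun Ω : ℝ => c / (2 * (√(Ω ^ 2 + a ^ 2) / Ω))) atTop (𝓝 (c / (2 * 1))) :=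
    tendsto_const_nhds.div (hX.const_mul 2) (by norm_num)
  have hlim := hfactor.mul (hminus.add hplus)
  have hvalue : c / (2 * 1) * (0 + 2) = c := by ring
  rw [hvalue] at hlim
  refine hlim.congr' ?_
  filter_upwards [hpos] with Ω hΩ
  field_simp

/-- The high-frequency limit of the longitudinal phase velocity `V^long(Ω)` of the HPR model
is the finite characteristic speed `c_∞ = √(c₀² + (4/3)c_s²)`: `V^long(Ω) → c_∞` as `Ω → ∞`. -/
theorem longitudinal_phase_velocity_high_freq_limit (c0 cs : ℝ) (hc0 : 0 < c0) (hcs : 0 < cs) :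
    Filter.Tendsto
      (fun Ω : ℝ =>
        let cinf := Real.sqrt (c0 ^ 2 + (4/3) * cs ^ 2)
        let X := Real.sqrt (Ω ^ 2 + 16)
        let Y := Real.sqrt (Ω ^ 2 + 16 * (c0 / cinf) ^ 4)
        (cinf / (2 * X)) *
          (Real.sqrt ((X - Ω) * (Y - Ω)) + Real.sqrt ((X + Ω) * (Y + Ω))))
      Filter.atTop (nhds (Real.sqrt (c0 ^ 2 + (4/3) * cs ^ 2))) := by
  have hX : (16 : ℝ) = 4 ^ 2 := by norm_num
  have hY (r : ℝ) : 16 * r ^ 4 = (4 * r ^ 2) ^ 2 := by ring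
  simp only [hY]
  rw [hX]
  exact longitudinal_phase_velocity_high_freq_limit_general _ 4 _
end

section
/- Let ρ > 0, T > 0, c_V > 0 and α > 0 be real numbers, set c_h = (α/ρ)√(T/c_V), and for Ω > 0 define X(Ω) = √(ρ² + Ω²) and the heat-wave phase velocity V^heat(Ω) = 2 (α √(T Ω) / (ρ √(c_V))) · ( √(X(Ω)+ρ) + √(X(Ω)−ρ) ) / ( √(X(Ω)+ρ) − √(X(Ω)−ρ) + 2 X(Ω) + 2Ω ). Then V^heat(Ω) tends to 0 as Ω tends to 0 from the right, and V^heat(Ω) tends to c_h as Ω tends to +∞: the low- and high-frequency limits of the heat-wave phase velocity of the hyperbolic heat conduction subsystem are 0 and the finite characteristic heat speed c_h, respectively. -/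
open Filter Topology

/-!
For `Ω ≥ 0` the phase velocity is `c_h` times a profile depending on `ρ` and `Ω` only. At `Ω = 0`
the profile is continuous, with nonzero denominator `√(2ρ) + 2ρ`, and vanishes because of its
factor `√Ω`. At high frequency, dividing numerator and denominator by `Ω` and using `X / Ω → 1`
makes both of them tend to `4`.
-/

theorem tendsto_sqrt_sq_add_sq_div_atTop (a : ℝ) :
    Tendsto (fun x : ℝ => √(a ^ 2 + x ^ 2) / x) atTop (𝓝 1) := by
  have tendsto_normalized : Tendsto (fun x : ℝ => √((a / x) ^ 2 + 1)) atTop (𝓝 1) := by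
    simpa using (((tendsto_const_nhds (x := a)).div_atTop tendsto_id).pow 2 |>.add_const 1).sqrt
  refine tendsto_normalized.congr' ?_
  filter_upwards [eventually_gt_atTop 0] with x hx
  calc √((a / x) ^ 2 + 1) = √((a ^ 2 + x ^ 2) / x ^ 2) := by congr 1; field_simp
    _ = √(a ^ 2 + x ^ 2) / x := by rw [Real.sqrt_div' _ (sq_nonneg x), Real.sqrt_sq hx.le]

theorem tendsto_sqrt_add_const_div_sqrt_atTop {f : ℝ → ℝ} {c : ℝ}
    (hf : Tendsto (fun x => f x / x) atTop (𝓝 c)) (b : ℝ) :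
    Tendsto (fun x => √(f x + b) / √x) atTop (𝓝 √c) := by
  have tendsto_quotient : Tendsto (fun x => (f x + b) / x) atTop (𝓝 c) := by
    simpa only [add_div, add_zero, id] using
      hf.add ((tendsto_const_nhds (x := b)).div_atTop tendsto_id)
  refine tendsto_quotient.sqrt.congr' ?_
  filter_upwards [eventually_ge_atTop 0] with x hx
  exact Real.sqrt_div' _ hx

/-- The heat-wave phase velocity `V^heat(Ω)`, with `X = √(ρ² + Ω²)`. -/
noncomputable def heatPhaseVelocity (ρ T cV α Ω : ℝ) : ℝ :=
  let X := √(ρ ^ 2 + Ω ^ 2)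
  2 * (α * √(T * Ω) / (ρ * √cV)) *
    ((√(X + ρ) + √(X - ρ)) / (√(X + ρ) - √(X - ρ) + 2 * X + 2 * Ω))

/-- The ratio `V^heat(Ω) / c_h`, written without the parameters `T`, `cV` and `α`, which cancel. -/
noncomputable def heatPhaseProfile (ρ Ω : ℝ) : ℝ :=
  let X := √(ρ ^ 2 + Ω ^ 2)
  2 * √Ω * ((√(X + ρ) + √(X - ρ)) / (√(X + ρ) - √(X - ρ) + 2 * X + 2 * Ω))

theorem heatPhaseVelocity_eq_mul_profile {T Ω : ℝ} (ρ cV α : ℝ) (hT : 0 ≤ T) (hΩ : 0 ≤ Ω) :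
    heatPhaseVelocity ρ T cV α Ω = α / ρ * √(T / cV) * heatPhaseProfile ρ Ω := by
  simp only [heatPhaseVelocity, heatPhaseProfile]
  rw [Real.sqrt_mul' T hΩ, Real.sqrt_div hT]
  ring

theorem tendsto_heatPhaseProfile_zero {ρ : ℝ} (hρ : 0 < ρ) :
    Tendsto (heatPhaseProfile ρ) (𝓝 0) (𝓝 0) := by
  have sqrt_at_zero : √(ρ ^ 2 + 0 ^ 2) = ρ := by
    rw [zero_pow two_ne_zero, add_zero, Real.sqrt_sq hρ.le]
  have continuousAt_zero : ContinuousAt (heatPhaseProfile ρ) 0 := by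
    refine ContinuousAt.mul (by fun_prop) (ContinuousAt.div (by fun_prop) (by fun_prop) ?_)
    rw [sqrt_at_zero, sub_self, Real.sqrt_zero, sub_zero]
    positivity
  have value_at_zero : heatPhaseProfile ρ 0 = 0 := by
    simp only [heatPhaseProfile, Real.sqrt_zero, mul_zero, zero_mul]
  simpa only [value_at_zero] using continuousAt_zero.tendsto

theorem heatPhaseProfile_eq_div_of_pos (ρ : ℝ) {Ω : ℝ} (hΩ : 0 < Ω) :
    heatPhaseProfile ρ Ω =
      let X := √(ρ ^ 2 + Ω ^ 2)
      2 * (√(X + ρ) / √Ω + √(X - ρ) / √Ω) /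
        ((√(X + ρ) / √Ω - √(X - ρ) / √Ω) / √Ω + 2 * (X / Ω) + 2) := by
  simp only [heatPhaseProfile]
  generalize √(ρ ^ 2 + Ω ^ 2) = X
  generalize √(X + ρ) = A
  generalize √(X - ρ) = B
  have numerator_eq : 2 * (A / √Ω + B / √Ω) = 2 * √Ω * (A + B) / Ω := by
    rw [mul_right_comm, mul_div_assoc, Real.sqrt_div_self']
    ring
  have denominator_eq : (A / √Ω - B / √Ω) / √Ω + 2 * (X / Ω) + 2 =
      (A - B + 2 * X + 2 * Ω) / Ω := by
    rw [← sub_div, div_div, Real.mul_self_sqrt hΩ.le]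
    field_simp
  rw [numerator_eq, denominator_eq, div_div_div_cancel_right₀ hΩ.ne', mul_div_assoc]

theorem tendsto_heatPhaseProfile_atTop (ρ : ℝ) :
    Tendsto (heatPhaseProfile ρ) atTop (𝓝 1) := by
  have hX := tendsto_sqrt_sq_add_sq_div_atTop ρ
  have hA : Tendsto (fun Ω => √(√(ρ ^ 2 + Ω ^ 2) + ρ) / √Ω) atTop (𝓝 1) := by
    simpa only [Real.sqrt_one] using tendsto_sqrt_add_const_div_sqrt_atTop hX ρ
  have hB : Tendsto (fun Ω => √(√(ρ ^ 2 + Ω ^ 2) - ρ) / √Ω) atTop (𝓝 1) := by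
    simpa only [Real.sqrt_one, ← sub_eq_add_neg] using
      tendsto_sqrt_add_const_div_sqrt_atTop hX (-ρ)
  have hnum := (hA.add hB).const_mul 2
  have hden := (((hA.sub hB).div_atTop Real.tendsto_sqrt_atTop).add (hX.const_mul 2)).add_const 2
  have hquot := hnum.div hden (by norm_num)
  rw [show (2 * (1 + 1) / (0 + 2 * 1 + 2) : ℝ) = 1 by norm_num] at hquot
  refine hquot.congr' ?_
  filter_upwards [eventually_gt_atTop 0] with Ω hΩ
  exact (heatPhaseProfile_eq_div_of_pos ρ hΩ).symm

theorem tendsto_heatPhaseVelocity_nhdsGT_zero {ρ T : ℝ} (hρ : 0 < ρ) (hT : 0 ≤ T) (cV α : ℝ) :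
    Tendsto (heatPhaseVelocity ρ T cV α) (𝓝[>] 0) (𝓝 0) := by
  have hlim := ((tendsto_heatPhaseProfile_zero hρ).mono_left
    (nhdsWithin_le_nhds (s := Set.Ioi 0))).const_mul (α / ρ * √(T / cV))
  rw [mul_zero] at hlim
  refine hlim.congr' ?_
  filter_upwards [self_mem_nhdsWithin] with Ω hΩ
  exact (heatPhaseVelocity_eq_mul_profile ρ cV α hT (Set.mem_Ioi.1 hΩ).le).symm

theorem tendsto_heatPhaseVelocity_atTop {T : ℝ} (hT : 0 ≤ T) (ρ cV α : ℝ) :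
    Tendsto (heatPhaseVelocity ρ T cV α) atTop (𝓝 (α / ρ * √(T / cV))) := by
  have hlim := (tendsto_heatPhaseProfile_atTop ρ).const_mul (α / ρ * √(T / cV))
  rw [mul_one] at hlim
  refine hlim.congr' ?_
  filter_upwards [eventually_ge_atTop 0] with Ω hΩ
  exact (heatPhaseVelocity_eq_mul_profile ρ cV α hT hΩ).symm

/-- The low- and high-frequency limits of the heat-wave phase velocity `V^heat(Ω)` of the
hyperbolic heat conduction subsystem of the HPR model are `0` and the finite characteristic
heat speed `c_h = (α/ρ)√(T/c_V)`, respectively. -/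
theorem heat_phase_velocity_limits (ρ T cV α : ℝ)
    (hρ : 0 < ρ) (hT : 0 < T) (hcV : 0 < cV) (hα : 0 < α) :
    Filter.Tendsto
        (fun Ω : ℝ =>
          let X := Real.sqrt (ρ ^ 2 + Ω ^ 2)
          2 * (α * Real.sqrt (T * Ω) / (ρ * Real.sqrt cV)) *
            ((Real.sqrt (X + ρ) + Real.sqrt (X - ρ)) /
              (Real.sqrt (X + ρ) - Real.sqrt (X - ρ) + 2 * X + 2 * Ω)))
        (nhdsWithin 0 (Set.Ioi 0)) (nhds 0) ∧
      Filter.Tendsto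
        (fun Ω : ℝ =>
          let X := Real.sqrt (ρ ^ 2 + Ω ^ 2)
          2 * (α * Real.sqrt (T * Ω) / (ρ * Real.sqrt cV)) *
            ((Real.sqrt (X + ρ) + Real.sqrt (X - ρ)) /
              (Real.sqrt (X + ρ) - Real.sqrt (X - ρ) + 2 * X + 2 * Ω)))
        Filter.atTop (nhds ((α / ρ) * Real.sqrt (T / cV))) :=
  ⟨tendsto_heatPhaseVelocity_nhdsGT_zero hρ hT.le cV α,
    tendsto_heatPhaseVelocity_atTop hT.le ρ cV α⟩
end

section
/- Let ρ₀ > 0, c_s and g > 0 be real numbers and let G₁ be a real 3×3 matrix. Define, for real τ in a neighbourhood of 0 where det(g·I + τ·G₁) > 0, the matrix-valued function σ(τ) = −ρ₀ c_s² √(det(g·I + τ·G₁)) · (g·I + τ·G₁) · dev(g·I + τ·G₁). Then σ(0) = 0 and σ is differentiable at τ = 0 with derivative σ'(0) = −ρ₀ c_s² g^{5/2} dev(G₁). (This is the first-order Chapman–Enskog expansion of the HPR viscous stress tensor σ = −ρ c_s² G dev(G) with ρ = ρ₀ √(det G), G = gI + τG₁, which yields Newton's law of viscosity in the stiff relaxation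 limit.) -/
open Matrix

attribute [local instance] Matrix.normedAddCommGroup Matrix.normedSpace

/-! Since `dev` is linear and kills multiples of the identity, `dev (g • 1 + τ • G₁) = τ • dev G₁`,
so the stress is `τ` times a factor depending continuously on `τ`. Its derivative at `0` is then the
value of that factor at the isotropic state `g • 1`; no derivative of the determinant is needed. -/

lemma hasDerivAt_sub_smul_of_continuousAt {𝕜 E : Type*} [NontriviallyNormedField 𝕜]
    [NormedAddCommGroup E] [NormedSpace 𝕜 E] {f : 𝕜 → E} {a : 𝕜} (hf : ContinuousAt f a) :
    HasDerivAt (fun x => (x - a) • f x) (f a) a := by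
  refine hasDerivAt_iff_tendsto_slope.mpr (hf.continuousWithinAt.tendsto.congr' ?_)
  filter_upwards [self_mem_nhdsWithin] with x hx
  simp only [slope_def_module, sub_self, zero_smul, sub_zero,
    inv_smul_smul₀ (sub_ne_zero.mpr hx)]

lemma dev_smul_one_add (c : ℝ) (M : Matrix (Fin 3) (Fin 3) ℝ) : dev (c • 1 + M) = dev M := by
  simp only [dev, trace_add, trace_smul, trace_one, Fintype.card_fin, smul_eq_mul]
  module

lemma dev_smul (c : ℝ) (M : Matrix (Fin 3) (Fin 3) ℝ) : dev (c • M) = c • dev M := by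
  simp only [dev, trace_smul, smul_eq_mul]
  module

lemma sqrt_det_smul_one_mul_self {n : Type*} [Fintype n] [DecidableEq n] {c : ℝ} (hc : 0 ≤ c) :
    √(c • (1 : Matrix n n ℝ)).det * c = c ^ ((Fintype.card n : ℝ) / 2 + 1) := by
  have sqrt_pow_card : √(c ^ Fintype.card n) = c ^ ((Fintype.card n : ℝ) / 2) := by
    rw [Real.sqrt_eq_rpow, ← Real.rpow_natCast_mul hc, mul_one_div]
  rw [det_smul, det_one, mul_one, sqrt_pow_card, Real.rpow_add_one' hc (by positivity)]

/-- The HPR viscous stress `-ρ c_s² G dev G` with `ρ = ρ₀ √(det G)`, divided by the constant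
`-ρ₀ c_s²`. -/
noncomputable def normalizedStress (G : Matrix (Fin 3) (Fin 3) ℝ) : Matrix (Fin 3) (Fin 3) ℝ :=
  √G.det • (G * dev G)

lemma normalizedStress_smul_one_add_smul (g τ : ℝ) (G₁ : Matrix (Fin 3) (Fin 3) ℝ) :
    normalizedStress (g • 1 + τ • G₁) =
      τ • √(g • 1 + τ • G₁).det • ((g • 1 + τ • G₁) * dev G₁) := by
  rw [normalizedStress, dev_smul_one_add, dev_smul, Matrix.mul_smul, smul_comm]

lemma hasDerivAt_normalizedStress_smul_one_add_smul {g : ℝ} (hg : 0 ≤ g)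
    (G₁ : Matrix (Fin 3) (Fin 3) ℝ) :
    HasDerivAt (fun τ : ℝ => normalizedStress (g • 1 + τ • G₁)) (g ^ ((5 : ℝ) / 2) • dev G₁) 0 := by
  let F (τ : ℝ) : Matrix (Fin 3) (Fin 3) ℝ :=
    √(g • 1 + τ • G₁).det • ((g • 1 + τ • G₁) * dev G₁)
  have F_continuous : Continuous F := by fun_prop
  have F_zero : F 0 = g ^ ((5 : ℝ) / 2) • dev G₁ := by
    simp only [F, zero_smul, add_zero, Matrix.smul_mul, Matrix.one_mul, smul_smul,
      sqrt_det_smul_one_mul_self hg, Fintype.card_fin]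
    norm_num
  have factorization : (fun τ => normalizedStress (g • 1 + τ • G₁)) = fun τ => (τ - 0) • F τ :=
    funext fun τ => by rw [normalizedStress_smul_one_add_smul, sub_zero]
  rw [factorization, ← F_zero]
  exact hasDerivAt_sub_smul_of_continuousAt F_continuous.continuousAt

/-- First-order Chapman–Enskog expansion of the HPR viscous stress tensor: for
`σ(τ) = −ρ₀ c_s² √(det(gI + τG₁)) (gI + τG₁) dev(gI + τG₁)`, one has `σ(0) = 0` and
`σ'(0) = −ρ₀ c_s² g^(5/2) dev(G₁)`. -/
theorem stress_chapman_enskog (ρ₀ cs g : ℝ) (hρ₀ : 0 < ρ₀) (hg : 0 < g)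
    (G₁ : Matrix (Fin 3) (Fin 3) ℝ) :
    let σ : ℝ → Matrix (Fin 3) (Fin 3) ℝ := fun τ =>
      (-(ρ₀ * cs ^ 2) *
          Real.sqrt ((g • (1 : Matrix (Fin 3) (Fin 3) ℝ) + τ • G₁).det)) •
        ((g • (1 : Matrix (Fin 3) (Fin 3) ℝ) + τ • G₁) *
          dev (g • (1 : Matrix (Fin 3) (Fin 3) ℝ) + τ • G₁))
    σ 0 = 0 ∧
      HasDerivAt σ ((-(ρ₀ * cs ^ 2) * g ^ ((5 : ℝ) / 2)) • dev G₁) 0 := by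
  intro σ
  have σ_eq (τ : ℝ) : σ τ = (-(ρ₀ * cs ^ 2)) • normalizedStress (g • 1 + τ • G₁) :=
    mul_smul _ _ _
  constructor
  · rw [σ_eq, normalizedStress_smul_one_add_smul, zero_smul, smul_zero]
  · rw [funext σ_eq, mul_smul]
    exact (hasDerivAt_normalizedStress_smul_one_add_smul hg.le G₁).const_smul (-(ρ₀ * cs ^ 2))
end
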